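/- arXiv:math/0609053 — 2 statements merged into one kernel-verified Lean document; each statement's English description precedes it below -/
import Mathlib

section
/- Let ∘ and ∗ be two actions of a finite group G on the sphere Sⁿ, with ∘ free, and suppose (Sⁿ, ∗) is n-simple. Then there exists a map f: Sⁿ → Sⁿ satisfying f(g ∘ x) = g ∗ f(x) for all g ∈ G and x ∈ Sⁿ. -/
/-!
The obstruction theory is carried out by hand, over a cover by free closed sets in place of a
cell structure (which a merely continuous action need not come with).

If `G` is trivial, the identity works. Otherwise `Sⁿ` is covered by finitely many closed sets `C`
that are disjoint from all their nontrivial `∘`-translates (`exists_closed_free_nhds`), and an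
equivariant map is built over one orbit `G ∘ C` at a time. Let `A` be the closed invariant set on
which it is already defined. By freeness (`exists_equivariant_extension`), it is enough to extend
the map from `A ∩ C` to `C` without regard to equivariance. As `C` is a proper closed subset of
`Sⁿ`, stereographic projection embeds it in an `n`-dimensional vector space `E`
(`exists_sphere_extension`), and every map from a closed subset of `E` to `Sⁿ` extends to `E`
(`exists_unit_extension`); this is where the `(n-1)`-connectedness of `Sⁿ` enters, in the guise of
Sard's theorem: the image of a smooth map from `E` to an `(n+1)`-dimensional space has dense
complement, so a small translation moves it off the origin.
-/

open Metric

/-- A space `Y` is `n`-simple (`π₁(Y,y₀)` acts trivially on `πₙ(Y,y₀)` for every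
basepoint): any two maps `Sⁿ → Y` that agree at a point and are freely homotopic
are homotopic rel that point. -/
def IsNSimpleSpace (n : ℕ) (Y : Type*) [TopologicalSpace Y] : Prop :=
  ∀ (f g : C(sphere (0 : EuclideanSpace ℝ (Fin (n + 1))) 1, Y))
    (x₀ : sphere (0 : EuclideanSpace ℝ (Fin (n + 1))) 1),
    f x₀ = g x₀ → f.Homotopic g → Nonempty (ContinuousMap.HomotopyRel f g {x₀})

open Set Module in
/-- A unit-vector-valued map defined on a closed subset of `E` extends to all of `E` when the target
sphere has dimension at least `dim E`. By Sard, a smooth approximation of a Tietze extension misses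
a point near the origin; after translating that point to `0` and normalizing one gets `h : E → S(F)`
that is close to `f` on `A`, and the difference `f - h` extends without increase in norm to some `D`, so that `h + D` vanishes
nowhere and can be normalized. -/
theorem exists_unit_extension {E F : Type*}
    [NormedAddCommGroup E] [NormedSpace ℝ E] [FiniteDimensional ℝ E]
    [NormedAddCommGroup F] [NormedSpace ℝ F] [FiniteDimensional ℝ F]
    (hEF : finrank ℝ E < finrank ℝ F) {A : Set E} (hA : IsClosed A) (f : E → F)
    (hf : ContinuousOn f A) (hf1 : ∀ x ∈ A, ‖f x‖ = 1) :
    ∃ g : E → F, Continuous g ∧ (∀ x, ‖g x‖ = 1) ∧ EqOn g f A := by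
  obtain ⟨f₁, hf₁⟩ := ContinuousMap.exists_restrict_eq hA
    (⟨A.domRestrict f, hf.domRestrict⟩ : C(A, F))
  have hf₁' : ∀ x ∈ A, f₁ x = f x := fun x hx ↦ congrArg (fun k : C(A, F) ↦ k ⟨x, hx⟩) hf₁
  obtain ⟨p, hp, hpf, -⟩ := f₁.continuous.exists_contDiff_approx 1
    (ε := fun _ ↦ 1 / 8) continuous_const (fun _ ↦ by norm_num)
  obtain ⟨c, hc, hcp⟩ := (hp.dense_compl_range_of_finrank_lt_finrank hEF).exists_dist_lt
    (0 : F) (ε := 1 / 8) (by norm_num)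
  rw [dist_zero_left] at hcp
  have hq0 : ∀ x, p x - c ≠ 0 := fun x hx ↦ hc ⟨x, sub_eq_zero.1 hx⟩
  have hqc : Continuous fun x ↦ p x - c := hp.continuous.sub continuous_const
  set h : E → F := fun x ↦ ‖p x - c‖⁻¹ • (p x - c) with hh
  have hhc : Continuous h :=
    (hqc.norm.inv₀ fun x ↦ norm_ne_zero_iff.2 (hq0 x)).smul hqc
  have hh1 : ∀ x, ‖h x‖ = 1 := fun x ↦ by
    simp [hh, norm_smul, norm_ne_zero_iff.2 (hq0 x)]
  have hclose : ∀ x ∈ A, ‖f x - h x‖ ≤ 1 / 2 := fun x hx ↦ by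
    have h1 : ‖f x - (p x - c)‖ ≤ 1 / 4 := by
      have h2 := hpf x
      rw [hf₁' x hx, dist_eq_norm, norm_sub_rev] at h2
      calc ‖f x - (p x - c)‖ = ‖(f x - p x) + c‖ := by congr 1; abel
        _ ≤ ‖f x - p x‖ + ‖c‖ := norm_add_le _ _
        _ ≤ 1 / 4 := by linarith
    have h3 : ‖(p x - c) - h x‖ = |‖p x - c‖ - 1| := by
      have : (p x - c) - h x = (1 - ‖p x - c‖⁻¹) • (p x - c) := by rw [hh, sub_smul, one_smul]
      rw [this, norm_smul, Real.norm_eq_abs, ← abs_of_nonneg (norm_nonneg (p x - c)), ← abs_mul,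
        abs_of_nonneg (norm_nonneg (p x - c)), sub_mul,
        inv_mul_cancel₀ (norm_ne_zero_iff.2 (hq0 x)), one_mul]
    have h4 : |‖p x - c‖ - 1| ≤ 1 / 4 := by
      have h5 := (abs_norm_sub_norm_le (f x) (p x - c)).trans h1
      rwa [hf1 x hx, abs_sub_comm] at h5
    calc ‖f x - h x‖ = ‖(f x - (p x - c)) + ((p x - c) - h x)‖ := by congr 1; abel
      _ ≤ _ := norm_add_le _ _
      _ ≤ 1 / 2 := by linarith
  let d : BoundedContinuousFunction A F := .ofNormedAddCommGroup (A.domRestrict fun x ↦ f x - h x)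
    (hf.sub hhc.continuousOn).domRestrict (1 / 2) fun x ↦ hclose x x.2
  obtain ⟨D, hDn, hD⟩ := BoundedContinuousFunction.exists_norm_eq_domRestrict_eq hA ℝ d
  have hD' : ∀ x ∈ A, D x = f x - h x := fun x hx ↦ 
    congrArg (fun k : BoundedContinuousFunction A F ↦ k ⟨x, hx⟩) hD
  have hDle : ∀ x, ‖D x‖ ≤ 1 / 2 := fun x ↦ (D.norm_coe_le_norm x).trans <| hDn.trans_le <|
    BoundedContinuousFunction.norm_ofNormedAddCommGroup_le _ (by norm_num) _
  have hs0 : ∀ x, h x + D x ≠ 0 := fun x hx ↦ by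
    have h5 : ‖h x‖ = ‖D x‖ := by rw [eq_neg_of_add_eq_zero_left hx, norm_neg]
    linarith [hh1 x, hDle x]
  have hsc : Continuous fun x ↦ h x + D x := hhc.add D.continuous
  refine ⟨fun x ↦ ‖h x + D x‖⁻¹ • (h x + D x),
    (hsc.norm.inv₀ fun x ↦ norm_ne_zero_iff.2 (hs0 x)).smul hsc, fun x ↦ ?_, fun x hx ↦ ?_⟩
  · rw [norm_smul, norm_inv, norm_norm, inv_mul_cancel₀ (norm_ne_zero_iff.2 (hs0 x))]
  · simp [hD' x hx, hf1 x hx]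

open Set Module in
/-- Partial self-maps of `Sⁿ` extend over proper closed subsets: stereographic projection from a
missed point turns such a subset into a subset of an `n`-dimensional vector space. -/
theorem exists_sphere_extension (n : ℕ)
    {A C : Set (sphere (0 : EuclideanSpace ℝ (Fin (n + 1))) 1)}
    (hA : IsClosed A) (hC : IsClosed C) (hCne : C ≠ univ)
    (f : sphere (0 : EuclideanSpace ℝ (Fin (n + 1))) 1 →
      sphere (0 : EuclideanSpace ℝ (Fin (n + 1))) 1)
    (hf : ContinuousOn f A) :
    ∃ k : sphere (0 : EuclideanSpace ℝ (Fin (n + 1))) 1 →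
      sphere (0 : EuclideanSpace ℝ (Fin (n + 1))) 1, ContinuousOn k C ∧ EqOn k f (A ∩ C) := by
  obtain ⟨v, hv⟩ := (ne_univ_iff_exists_notMem C).1 hCne
  have hv1 : ‖(v : EuclideanSpace ℝ (Fin (n + 1)))‖ = 1 := norm_eq_of_mem_sphere v
  set φ := stereographic hv1 with hφ
  have hsub : C ⊆ φ.source := by
    rw [hφ, stereographic_source]
    rintro x hx rfl
    exact hv hx
  have hsub' : A ∩ C ⊆ φ.source := inter_subset_right.trans hsub
  have hBcl : IsClosed (φ '' (A ∩ C)) :=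
    ((hA.inter hC).isCompact.image_of_continuousOn (φ.continuousOn.mono hsub')).isClosed
  have hfin : finrank ℝ (ℝ ∙ (v : EuclideanSpace ℝ (Fin (n + 1))))ᗮ
      < finrank ℝ (EuclideanSpace ℝ (Fin (n + 1))) := by
    have : Fact (finrank ℝ (EuclideanSpace ℝ (Fin (n + 1))) = n + 1) := ⟨by simp⟩
    rw [Submodule.finrank_orthogonal_span_singleton (n := n) (ne_zero_of_mem_unit_sphere v)]
    simp
  have hcont : ContinuousOn (fun w ↦ (f (φ.symm w) : EuclideanSpace ℝ (Fin (n + 1))))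
      (φ '' (A ∩ C)) := by
    refine continuous_subtype_val.comp_continuousOn (hf.comp (t := A)
      (φ.continuousOn_symm.mono ?_) ?_)
    · rintro _ ⟨x, hx, rfl⟩
      exact φ.map_source (hsub' hx)
    · rintro _ ⟨x, hx, rfl⟩
      rw [φ.left_inv (hsub' hx)]
      exact hx.1
  obtain ⟨g, hg, hg1, hgf⟩ := exists_unit_extension hfin hBcl _ hcont
    fun w _ ↦ norm_eq_of_mem_sphere _
  refine ⟨fun x ↦ ⟨g (φ x), by simp [hg1]⟩, ?_, fun x hx ↦ ?_⟩
  · exact Topology.IsInducing.subtypeVal.continuousOn_iff.2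
      (hg.comp_continuousOn (φ.continuousOn.mono hsub))
  · apply Subtype.ext
    simpa [φ.left_inv (hsub' hx)] using hgf (mem_image_of_mem φ hx)

open Set in
/-- If the translates of the closed set `C` are pairwise disjoint, then an extension `k` of the
equivariant map `f` over `C` alone, not required to respect the actions, propagates to an
equivariant extension over the whole orbit of `C`. -/
theorem exists_equivariant_extension {G X Y : Type*} [Group G] [Finite G] [TopologicalSpace X]
    [TopologicalSpace Y] (ρ : G →* Equiv.Perm X) (σ : G →* Equiv.Perm Y)
    (hρ : ∀ g, Continuous (ρ g)) (hσ : ∀ g, Continuous (σ g))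
    {A C : Set X} (hA : IsClosed A) (hAinv : ∀ g, ∀ x ∈ A, ρ g x ∈ A) (hC : IsClosed C)
    (hdisj : ∀ g, g ≠ 1 → ∀ x ∈ C, ρ g x ∉ C) (f k : X → Y) (hf : ContinuousOn f A)
    (hfe : ∀ g, ∀ x ∈ A, f (ρ g x) = σ g (f x)) (hk : ContinuousOn k C)
    (hkf : EqOn k f (A ∩ C)) :
    ∃ F : X → Y, ContinuousOn F (A ∪ ⋃ g, ρ g ⁻¹' C) ∧
      ∀ g, ∀ x ∈ A ∪ ⋃ g, ρ g ⁻¹' C, F (ρ g x) = σ g (F x) := by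
  classical
  have hmul : ∀ g h x, ρ (g * h) x = ρ g (ρ h x) := fun g h x ↦ by simp
  have hmul' : ∀ g h x, σ (g * h) x = σ g (σ h x) := fun g h x ↦ by simp
  let F : X → Y := fun x ↦ if x ∈ A then f x else
    if h : ∃ g, ρ g x ∈ C then σ h.choose⁻¹ (k (ρ h.choose x)) else f x
  have hFA : ∀ x ∈ A, F x = f x := fun x hx ↦ if_pos hx
  have hFC : ∀ g x, ρ g x ∈ C → F x = σ g⁻¹ (k (ρ g x)) := fun g x hx ↦ by
    by_cases hxA : x ∈ A
    · rw [hFA x hxA, hkf ⟨hAinv g x hxA, hx⟩, hfe g x hxA, ← hmul', inv_mul_cancel]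
      simp
    · have h : ∃ g, ρ g x ∈ C := ⟨g, hx⟩
      have hg : h.choose = g := by
        by_contra hne
        refine hdisj (h.choose * g⁻¹) (fun e ↦ hne (mul_inv_eq_one.1 e)) _ hx ?_
        rw [← hmul, inv_mul_cancel_right]
        exact h.choose_spec
      simp only [F, if_neg hxA, dif_pos h, hg]
  refine ⟨F, ?_, ?_⟩
  · refine ContinuousOn.union_of_isClosed (hf.congr hFA) ?_ hA
      (isClosed_iUnion_of_finite fun g ↦ hC.preimage (hρ g))
    refine (locallyFinite_of_finite _).continuousOn_iUnion (fun g ↦ hC.preimage (hρ g)) fun g ↦ ?_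
    exact ((hσ g⁻¹).comp_continuousOn (hk.comp (hρ g).continuousOn fun x hx ↦ hx)).congr
      fun x hx ↦ hFC g x hx
  · rintro g x (hx | hx)
    · rw [hFA _ (hAinv g x hx), hFA x hx, hfe g x hx]
    · obtain ⟨a, ha⟩ := mem_iUnion.1 hx
      have ha' : ρ (a * g⁻¹) (ρ g x) = ρ a x := by rw [← hmul, inv_mul_cancel_right]
      rw [hFC (a * g⁻¹) (ρ g x) (by rw [ha']; exact ha), hFC a x ha, ha', ← hmul']
      simp

open Set Filter Topology in
/-- Every point has a closed neighbourhood that is disjoint from its nontrivial translates. -/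
theorem exists_closed_free_nhds {G X : Type*} [Group G] [Finite G] [TopologicalSpace X]
    [T2Space X] [RegularSpace X] (ρ : G →* Equiv.Perm X) (hρ : ∀ g, Continuous (ρ g))
    (hfree : ∀ g : G, g ≠ 1 → ∀ x, ρ g x ≠ x) (x : X) :
    ∃ C ∈ 𝓝 x, IsClosed C ∧ ∀ g, g ≠ 1 → ∀ y ∈ C, ρ g y ∉ C := by
  have key : ∀ g : G, ∃ U ∈ 𝓝 x, g ≠ 1 → ∀ y ∈ U, ρ g y ∉ U := fun g ↦ by
    by_cases hg : g = 1
    · exact ⟨univ, univ_mem, fun h ↦ absurd hg h⟩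
    · obtain ⟨V, W, hV, hW, hVW⟩ := t2_separation_nhds (hfree g hg x)
      refine ⟨W ∩ ρ g ⁻¹' V, inter_mem hW ((hρ g).continuousAt hV), fun _ y hy hy' ↦ ?_⟩
      exact disjoint_left.1 hVW hy.2 hy'.1
  choose U hU hUd using key
  obtain ⟨C, hC, hCcl, hCU⟩ := exists_mem_nhds_isClosed_subset (iInter_mem.2 hU)
  exact ⟨C, hC, hCcl, fun g hg y hy hgy ↦
    hUd g hg y (mem_iInter.1 (hCU hy) g) (mem_iInter.1 (hCU hgy) g)⟩

/-- If `∘` and `∗` are two continuous actions (given by homomorphisms `ρ`, `σ` into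
the permutations by homeomorphisms) of a finite group `G` on the sphere `Sⁿ`, with
`∘` free and `(Sⁿ, ∗)` `n`-simple, then there exists a continuous map
`f : Sⁿ → Sⁿ` with `f(g ∘ x) = g ∗ f(x)` for all `g ∈ G` and `x ∈ Sⁿ`. -/
theorem exists_equivariant_selfmap_sphere {G : Type*} [Group G] [Finite G] (n : ℕ)
    (ρ σ : G →* Equiv.Perm (sphere (0 : EuclideanSpace ℝ (Fin (n + 1))) 1))
    (hρcont : ∀ g : G, Continuous (ρ g)) (hσcont : ∀ g : G, Continuous (σ g))
    (hfree : ∀ g : G, g ≠ 1 → ∀ x, ρ g x ≠ x)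
    (hsimple : IsNSimpleSpace n (sphere (0 : EuclideanSpace ℝ (Fin (n + 1))) 1)) :
    ∃ f : C(sphere (0 : EuclideanSpace ℝ (Fin (n + 1))) 1,
        sphere (0 : EuclideanSpace ℝ (Fin (n + 1))) 1),
      ∀ (g : G) x, f (ρ g x) = σ g (f x) := by
  rcases subsingleton_or_nontrivial G with hG | hG
  · exact ⟨ContinuousMap.id _, fun g x ↦ by simp [Subsingleton.elim g 1]⟩
  obtain ⟨g₀, hg₀⟩ := exists_ne (1 : G)
  choose C hCn hCcl hCd using exists_closed_free_nhds ρ hρcont hfree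
  -- A free set is proper, since a nontrivial translate of any of its points lies outside it.
  have hCne : ∀ x, C x ≠ Set.univ := fun x hx ↦
    hCd x g₀ hg₀ x (mem_of_mem_nhds (hCn x)) (by rw [hx]; trivial)
  have hmul : ∀ g h x, ρ (g * h) x = ρ g (ρ h x) := fun g h x ↦ by simp
  have hstep : ∀ t : Finset (sphere (0 : EuclideanSpace ℝ (Fin (n + 1))) 1),
      ∃ F : sphere (0 : EuclideanSpace ℝ (Fin (n + 1))) 1 →
        sphere (0 : EuclideanSpace ℝ (Fin (n + 1))) 1,
      ContinuousOn F (⋃ i ∈ t, ⋃ g, ρ g ⁻¹' C i) ∧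
        ∀ g, ∀ x ∈ ⋃ i ∈ t, ⋃ g, ρ g ⁻¹' C i, F (ρ g x) = σ g (F x) := by
    classical
    intro t
    induction t using Finset.induction_on with
    | empty => exact ⟨id, by simp, by simp⟩
    | insert a t _ ih =>
      obtain ⟨F, hF, hFe⟩ := ih
      have hA : IsClosed (⋃ i ∈ t, ⋃ g, ρ g ⁻¹' C i) :=
        t.finite_toSet.isClosed_biUnion fun i _ ↦
          isClosed_iUnion_of_finite fun g ↦ (hCcl i).preimage (hρcont g)
      have hAinv : ∀ g, ∀ x ∈ ⋃ i ∈ t, ⋃ g, ρ g ⁻¹' C i,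
          ρ g x ∈ ⋃ i ∈ t, ⋃ g, ρ g ⁻¹' C i := fun g x hx ↦ by
        simp only [Set.mem_iUnion, Set.mem_preimage] at hx ⊢
        obtain ⟨i, hi, h, hx⟩ := hx
        exact ⟨i, hi, h * g⁻¹, by rwa [← hmul, inv_mul_cancel_right]⟩
      obtain ⟨k, hk, hkF⟩ := exists_sphere_extension n hA (hCcl a) (hCne a) F hF
      rw [Finset.set_biUnion_insert, Set.union_comm]
      exact exists_equivariant_extension ρ σ hρcont hσcont hA hAinv (hCcl a) (hCd a) F k hF hFe
        hk hkF
  obtain ⟨t, ht⟩ := CompactSpace.elim_nhds_subcover C hCn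
  obtain ⟨F, hF, hFe⟩ := hstep t
  have hcov : (⋃ i ∈ t, ⋃ g, ρ g ⁻¹' C i) = Set.univ := by
    refine Set.eq_univ_of_forall fun x ↦ ?_
    have hx : x ∈ ⋃ i ∈ t, C i := by rw [ht]; trivial
    simp only [Set.mem_iUnion, Set.mem_preimage] at hx ⊢
    obtain ⟨i, hi, hx⟩ := hx
    exact ⟨i, hi, 1, by simpa using hx⟩
  rw [hcov] at hF hFe
  exact ⟨⟨F, continuousOn_univ.1 hF⟩, fun g x ↦ hFe g x trivial⟩
end

section
/- Let μ be a Borel probability measure on S² with positive measure on every nonempty open set and zero measure on every great-circle arc. Then there exist three planes through the origin of ℝ³ intersecting along a common line, cutting S² into six angular sectors σ₁,…,σ₆ (cyclically ordered), such that the measures are in the ratio μ(σ₁):…:μ(σ₆) = 1:1:2:1:1:2 (i.e., μ(σ₁)=μ(σ₂)=μ(σ₄)=μ(σ₅)=1/8 and μ(σ₃)=μ(σ₆)=1/4). -/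
/-!
The fan is found as a plane `n^⊥` bisecting `μ` together with two further planes through a common
axis in `n^⊥`.

For an orthonormal pair `(y, n)`, rotate the half-plane through `y` (with axis orthogonal to `y` and
`n`) towards `n`. The measure `sweep` of the lune swept increases strictly and continuously, so
there is a unique angle `quarterAngle` `α(y, n)` at which it equals a quarter of the measure of
the hemisphere around `n`, and `α` is continuous. If the hemispheres around `±n` both have measure
`1/2` and
`A = α(y, n) - α(-y, -n)` and `B = α(-y, n) - α(y, -n)` both vanish, then the plane at angle
`α(y, n)` cuts off `1/8` on both sides of `n^⊥`, as does the plane at angle `-α(-y, n)`, and the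
three planes form the desired fan. So three equations have to be solved on the three-dimensional
space of orthonormal pairs, with symmetries: `(y, n) ↦ (-y, n)` swaps `A` and `B`, and
`(y, n) ↦ (-y, -n)` negates both.

The excess `h(n)` of the hemisphere around `n` over `1/2` is odd. By `exists_joinedIn_antipode`, for
every `ε > 0` there is a path of orthonormal frames `(n, e, f)` with `|h(n)| < ε` throughout, from
some frame to its half-turn `(-n, -e, f)`; this is a version for arbitrary continuous odd functions
of the fact that the zero set of such a function on the sphere contains a centrally symmetric curve.
Over such a path, the circles of pairs `(cos φ · e + sin φ · f, n)` form a surface, closing up to a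
Klein bottle, on which the map `G = (A + B) + i (A - B)` satisfies `G (s, φ + π) = conj G (s, φ)`
and `G (1, φ) = -G (0, -φ)`. Such a map has a zero by a parity count on its winding
(`exists_zero_of_klein_symm`). Hence `A = B = 0` has solutions with `|h|` arbitrarily small, and by
compactness one with `h = 0`.
-/

open Metric MeasureTheory Real
open scoped RealInnerProductSpace

/-- The open angular sector of the unit sphere `S² ⊆ ℝ³` around the axis `x`, between
the great semicircles in directions `cos t₁·u + sin t₁·w` and `cos t₂·u + sin t₂·w`
(for `(x, u, w)` an orthonormal frame). -/
def angularSector (x u w : EuclideanSpace ℝ (Fin 3)) (t₁ t₂ : ℝ) :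
    Set (sphere (0 : EuclideanSpace ℝ (Fin 3)) 1) :=
  {y | ∃ s c t : ℝ, 0 < c ∧ t₁ < t ∧ t < t₂ ∧
    (y : EuclideanSpace ℝ (Fin 3)) = s • x + c • (Real.cos t • u + Real.sin t • w)}

/-- A Borel measure on `S²` is proper if every nonempty open set has positive measure
and every circle (intersection of the sphere with an affine plane), hence every
circular arc, is null. -/
def IsProperSphereMeasure (μ : Measure (sphere (0 : EuclideanSpace ℝ (Fin 3)) 1)) : Prop :=
  (∀ U : Set (sphere (0 : EuclideanSpace ℝ (Fin 3)) 1),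
    IsOpen U → U.Nonempty → 0 < μ U) ∧
  (∀ (v : EuclideanSpace ℝ (Fin 3)) (c : ℝ), v ≠ 0 →
    μ {y | ⟪v, (y : EuclideanSpace ℝ (Fin 3))⟫ = c} = 0)

/-! ### Zeros of maps with Klein-bottle symmetry and odd functions on the sphere -/
lemma exists_continuous_exp_lift (G : ℝ × ℝ → ℂ) (hG : Continuous G) (h0 : ∀ z, G z ≠ 0) :
    ∃ L : ℝ × ℝ → ℂ, Continuous L ∧ ∀ z, Complex.exp (L z) = G z := by
  have hU : IsSimplyConnected (Set.univ : Set (ℝ × ℝ)) := by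
    have := convex_univ (𝕜 := ℝ) (E := ℝ × ℝ) |>.contractibleSpace Set.univ_nonempty
    exact SimplyConnectedSpace.ofContractible _
  obtain ⟨f, hf, hfe⟩ := Complex.exists_continuousOn_eqOn_exp_comp hU isOpen_univ
    (g := G) hG.continuousOn (by rintro ⟨z, -, hz⟩; exact h0 z hz)
  exact ⟨f, continuousOn_univ.1 hf, fun z => hfe (Set.mem_univ z)⟩

lemma exists_int_of_exp_eq_one {Y : Type*} [TopologicalSpace Y] [PreconnectedSpace Y] [Nonempty Y]
    (L : Y → ℂ) (hL : Continuous L) (h : ∀ z, Complex.exp (L z) = 1) :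
    ∃ n : ℤ, ∀ z, L z = n * (2 * π * Complex.I) := by
  choose n hn using fun z => Complex.exp_eq_one_iff.1 (h z)
  have him : ∀ z, (n z : ℝ) = (L z).im / (2 * π) := by
    intro z
    have := congrArg Complex.im (hn z)
    simp at this
    rw [this]; field_simp
  have hc : Continuous n := by
    rw [Int.isClosedEmbedding_coe_real.isEmbedding.continuous_iff]
    have : ((fun k : ℤ => (k : ℝ)) ∘ n) = fun z => (L z).im / (2 * π) := by
      ext z; exact him z
    rw [this]
    fun_prop
  obtain ⟨z0⟩ := ‹Nonempty Y›
  refine ⟨n z0, fun z => ?_⟩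
  rw [hn z, PreconnectedSpace.constant ‹_› hc]

/-- A map `G : ℝ × ℝ → ℂ` with `G (s, φ + π) = conj (G (s, φ))` and `G (1, φ) = -G (0, -φ)` has a
zero. If `L` were a continuous logarithm of `G`, the first symmetry would give
`Im L (s, φ + π) + Im L (s, φ) = 2πk` and the second
`Im L (1, φ) - Im L (0, -φ) = π + 2πm`, with `k` and `m` constant. Adding the second identity at
`φ = 0` and `φ = π` and eliminating with the first at `(1, 0)` and `(0, -π)` leaves
`0 = 2π + 4πm`. -/
lemma exists_zero_of_klein_symm (G : ℝ × ℝ → ℂ) (hG : Continuous G)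
    (hconj : ∀ s φ, G (s, φ + π) = (starRingEnd ℂ) (G (s, φ)))
    (hflip : ∀ φ, G (1, φ) = - G (0, -φ)) : ∃ z, G z = 0 := by
  by_contra! h0
  obtain ⟨L, hL, hLG⟩ := exists_continuous_exp_lift G hG h0
  obtain ⟨k, hk⟩ := exists_int_of_exp_eq_one
    (fun z : ℝ × ℝ => L (z.1, z.2 + π) - (starRingEnd ℂ) (L z)) (by fun_prop) (by
      rintro ⟨s, φ⟩
      rw [Complex.exp_sub, Complex.exp_conj, hLG, hLG, hconj, div_self]
      exact (map_ne_zero _).2 (h0 _))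
  obtain ⟨m, hm⟩ := exists_int_of_exp_eq_one
    (fun φ : ℝ => L (1, φ) - L (0, -φ) - π * Complex.I) (by fun_prop) (by
      intro φ
      rw [Complex.exp_sub, Complex.exp_sub, hLG, hLG, hflip, Complex.exp_pi_mul_I]
      have := h0 (0, -φ)
      field_simp)
  have h1 := hk (1, 0)
  have h2 := hk (0, -π)
  have h3 := hm 0
  have h4 := hm π
  simp only [zero_add, neg_zero, neg_add_cancel] at h1 h2 h3 h4
  have h1 := congrArg Complex.im h1
  have h2 := congrArg Complex.im h2
  have h3 := congrArg Complex.im h3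
  have h4 := congrArg Complex.im h4
  simp at h1 h2 h3 h4
  have : π * (1 + 2 * m) = 0 := by linarith
  have h5 : (1 + 2 * m : ℝ) = 0 := by
    rcases mul_eq_zero.1 this with h | h
    · exact absurd h pi_ne_zero
    · exact h
  have h6 : (1 + 2 * m : ℤ) = 0 := by exact_mod_cast h5
  omega

/-- An odd function on the sphere has an antipodal pair connected through its almost-zeros.
The map `F` is to be read as spherical coordinates (longitude, polar angle), lifted to a space `X`
of frames; `σ` covers the antipodal map, `ρ` rotates a frame about its base point, and `h` is odd
under `σ` and invariant under `ρ`.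

If no `x` were joined to `σ x` inside `V = {|h| < ε}`, one could choose a set `K` of path components
of `V` with `V = K ⊔ σ K`. The function `Φ` equal to `exp (iπ(1 + h/ε))` on `K` and to `1` off `K` is
then continuous, since `h = ±ε` on the boundary of `K`, and satisfies `Φ = g · Φ ∘ σ` with
`g = exp (iπ(1 + c/ε))`, `c` being `h` truncated to `[-ε, ε]`. A continuous logarithm `θ` of `Φ`
descends to the simply connected sphere, so `θ - θ ∘ σ = iπ(1 + c/ε) + 2πin` for a constant `n`.
As `c` is odd, adding this identity at `z` and at `σ z` gives `0 = 2πi + 4πin`, which is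
impossible. -/
lemma exists_joinedIn_antipode {X : Type*} [TopologicalSpace X] (h : X → ℝ) (σ : X → X)
    (ρ : ℝ → X → X) (F : ℝ × ℝ → X) (hh : Continuous h) (hσ : Continuous σ) (hF : Continuous F)
    (hρ : ∀ x, Continuous fun t => ρ t x) (hρ0 : ∀ x, ρ 0 x = x)
    (hhσ : ∀ x, h (σ x) = - h x) (hhρ : ∀ t x, h (ρ t x) = h x) (hσσ : ∀ x, σ (σ x) = x)
    (hFρ : ∀ a b, F (a + π, -b) = ρ π (F (a, b))) (hFσ : ∀ a b, F (a, b + π) = σ (F (a, b)))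
    (hF0 : ∀ a, F (a, 0) = ρ a (F (0, 0))) {ε : ℝ} (hε : 0 < ε) :
    ∃ x, JoinedIn {x | |h x| < ε} x (σ x) := by
  classical
  by_contra! hno
  set V : Set X := {x | |h x| < ε} with hV
  have hσV : ∀ x, x ∈ V → σ x ∈ V := by
    intro x hx
    simpa [hV, hhσ] using hx
  have hρV : ∀ t x, x ∈ V → ρ t x ∈ V := by
    intro t x hx
    simpa [hV, hhρ] using hx
  have hσJ : ∀ x y, JoinedIn V x y → JoinedIn V (σ x) (σ y) := by
    intro x y hxy
    refine (hxy.map hσ).mono ?_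
    rintro _ ⟨x, hx, rfl⟩
    exact hσV x hx
  have hcongr : ∀ x y, JoinedIn V x y → pathComponentIn V x = pathComponentIn V y := by
    intro x y hxy
    ext z
    exact ⟨fun hz => hxy.symm.trans hz, fun hz => hxy.trans hz⟩
  -- A set of path components of `V` containing exactly one component of each pair `C, σ C`.
  let K : Set X := {x | x ∈ V ∧ WellOrderingRel (pathComponentIn V x) (pathComponentIn V (σ x))}
  have hKJ : ∀ x y, JoinedIn V x y → (x ∈ K ↔ y ∈ K) := by
    intro x y hxy
    simp only [K, Set.mem_ofPred_eq, hcongr x y hxy, hcongr _ _ (hσJ x y hxy), hxy.source_mem,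
      hxy.target_mem]
  have hKσ : ∀ x ∈ V, (σ x ∈ K ↔ x ∉ K) := by
    intro x hx
    have hne : pathComponentIn V x ≠ pathComponentIn V (σ x) := by
      intro he
      apply hno x
      have : σ x ∈ pathComponentIn V (σ x) := mem_pathComponentIn_self (hσV x hx)
      rwa [← he] at this
    simp only [K, Set.mem_ofPred_eq, hσσ, hx, hσV x hx, true_and]
    constructor
    · intro h1 h2
      exact asymm_of WellOrderingRel h1 h2
    · intro h1
      rcases trichotomous_of WellOrderingRel (pathComponentIn V x) (pathComponentIn V (σ x)) with
        h2 | h2 | h2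
      · exact absurd h2 h1
      · exact absurd h2 hne
      · exact h2
  have hKρ : ∀ t x, (ρ t x ∈ K ↔ x ∈ K) := by
    intro t x
    by_cases hx : x ∈ V
    · refine (hKJ _ _ ?_).symm
      refine JoinedIn.ofLine (f := fun s => ρ (s * t) x) ?_ (by simp [hρ0]) (by simp) ?_
      · exact ((hρ x).comp (continuous_mul_const t)).continuousOn
      · rintro _ ⟨s, -, rfl⟩
        exact hρV _ _ hx
    · have h2 : ρ t x ∉ V := by simpa [hV, hhρ] using hx
      exact iff_of_false (fun h => h2 h.1) (fun h => hx h.1)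
  have hWo : IsOpen (F ⁻¹' V) :=
    (isOpen_lt (continuous_abs.comp hh) continuous_const).preimage hF
  -- Membership in `K` is locally constant along `F`, as small balls of the plane are convex.
  have hloc : ∀ z, F z ∈ V → ∀ᶠ z' in nhds z, F z' ∈ V ∧ (F z' ∈ K ↔ F z ∈ K) := by
    intro z hz
    obtain ⟨r, hr, hball⟩ := Metric.isOpen_iff.1 hWo z hz
    filter_upwards [Metric.ball_mem_nhds z hr] with z' hz'
    refine ⟨hball hz', (hKJ _ _ ?_).symm⟩
    refine JoinedIn.ofLine (f := fun s => F (AffineMap.lineMap z z' s)) ?_ (by simp) (by simp) ?_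
    · exact (hF.comp AffineMap.lineMap_continuous).continuousOn
    · rintro _ ⟨s, hs, rfl⟩
      exact hball ((convex_ball z r).lineMap_mem (Metric.mem_ball_self hr) hz' hs)
  let c : ℝ × ℝ → ℝ := fun z => max (-ε) (min ε (h (F z)))
  have hc : Continuous c := by fun_prop
  -- As `c` is `h ∘ F` truncated to `[-ε, ε]`, the function `g` is `1` outside `V`.
  let g : ℝ × ℝ → ℂ := fun z => Complex.exp ((π * (1 + c z / ε) : ℝ) * Complex.I)
  have hg : Continuous g := by fun_prop
  have hg1 : ∀ z, F z ∉ V → g z = 1 := by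
    intro z hz
    have : ε ≤ |h (F z)| := by simpa [hV] using hz
    rcases le_abs'.1 this with h1 | h1
    · have : c z = -ε := by
        simp only [c]; rw [min_eq_right (by linarith), max_eq_left h1]
      simp [g, this, hε.ne']
    · have : c z = ε := by
        simp only [c]; rw [min_eq_left h1, max_eq_right (by linarith)]
      simp only [g, this, div_self hε.ne']
      rw [show ((π * (1 + 1) : ℝ) : ℂ) = 2 * π by push_cast; ring, Complex.exp_two_pi_mul_I]
  have hcσ : ∀ a b, c (a, b + π) = - c (a, b) := by
    intro a b
    simp only [c, hFσ, hhσ]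
    rcases le_total ε (h (F (a, b))) with h1 | h1 <;>
    rcases le_total (h (F (a, b))) (-ε) with h2 | h2
    · linarith
    · rw [min_eq_left h1, min_eq_right (by linarith), max_eq_left (by linarith),
        max_eq_right (by linarith)]
    · rw [min_eq_right h1, min_eq_left (by linarith), max_eq_right (by linarith),
        max_eq_left (by linarith), neg_neg]
    · rw [min_eq_right h1, min_eq_right (by linarith), max_eq_right (by linarith),
        max_eq_right (by linarith)]
  have hgσ : ∀ a b, g (a, b) * g (a, b + π) = 1 := by
    intro a b
    simp only [g, hcσ]
    rw [← Complex.exp_add, ← add_mul, ← Complex.ofReal_add]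
    rw [show π * (1 + c (a, b) / ε) + π * (1 + -c (a, b) / ε) = 2 * π by ring]
    push_cast
    exact Complex.exp_two_pi_mul_I
  let Φ : ℝ × ℝ → ℂ := fun z => if F z ∈ K then g z else 1
  have hΦ : Continuous Φ := by
    refine Continuous.if ?_ hg continuous_const
    intro z hz
    apply hg1
    intro hzV
    have hl := hloc z hzV
    rw [frontier_eq_closure_inter_closure] at hz
    obtain ⟨z1, ⟨h1, h1'⟩⟩ := (mem_closure_iff_frequently.1 hz.1).and_eventually hl |>.exists
    obtain ⟨z2, ⟨h2, h2'⟩⟩ := (mem_closure_iff_frequently.1 hz.2).and_eventually hl |>.exists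
    exact h2 (h2'.2.2 (h1'.2.1 h1))
  have hΦ0 : ∀ z, Φ z ≠ 0 := by
    intro z
    simp only [Φ]
    split_ifs
    · exact Complex.exp_ne_zero _
    · exact one_ne_zero
  have hΦσ : ∀ a b, Φ (a, b) = g (a, b) * Φ (a, b + π) := by
    intro a b
    simp only [Φ, hFσ]
    by_cases hx : F (a, b) ∈ V
    · by_cases hk : F (a, b) ∈ K
      · rw [if_pos hk, if_neg (fun h => (hKσ _ hx).1 h hk), mul_one]
      · rw [if_neg hk, if_pos ((hKσ _ hx).2 hk), hgσ]
    · have h2 : σ (F (a, b)) ∉ V := by simpa [hV, hhσ] using hx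
      rw [if_neg (fun h => hx h.1), if_neg (fun h => h2 h.1), hg1 _ hx, mul_one]
  have hΦρ : ∀ a b, Φ (a + π, -b) = Φ (a, b) := by
    intro a b
    simp only [Φ, g, c, hFρ, hhρ, hKρ]
  have hF2 : ∀ a b, F (a, b + 2 * π) = F (a, b) := by
    intro a b
    rw [two_mul, ← add_assoc, hFσ, hFσ, hσσ]
  have hΦ2 : ∀ a b, Φ (a, b + 2 * π) = Φ (a, b) := by
    intro a b
    simp only [Φ, g, c, hF2]
  have hΦa0 : ∀ a, Φ (a, 0) = Φ (0, 0) := by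
    intro a
    simp only [Φ, g, c, hF0 a, hhρ, hKρ]
  have hΦaπ : ∀ a, Φ (a, π) = Φ (0, π) := by
    intro a
    have h1 := hΦσ a 0
    have h2 := hΦσ 0 0
    have h3 : g (a, 0) = g (0, 0) := by simp only [g, c, hF0 a, hhρ]
    rw [zero_add, hΦa0, h3] at h1
    rw [zero_add, h1] at h2
    exact mul_left_cancel₀ (Complex.exp_ne_zero _) h2
  obtain ⟨θ, hθ, hθΦ⟩ := exists_continuous_exp_lift Φ hΦ hΦ0
  have hexp : ∀ z w, Φ z = Φ w → Complex.exp (θ z - θ w) = 1 := by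
    intro z w hzw
    rw [Complex.exp_sub, hθΦ, hθΦ, hzw, div_self (hΦ0 w)]
  -- The logarithm `θ` is constant over each pole and inherits the chart identifications of `Φ`:
  -- the corresponding differences are constant multiples of `2πi` that vanish at a pole.
  have hθa0 : ∀ a, θ (a, 0) = θ (0, 0) := by
    obtain ⟨n, hn⟩ := exists_int_of_exp_eq_one (fun a : ℝ => θ (a, 0) - θ (0, 0)) (by fun_prop)
      (fun a => hexp _ _ (hΦa0 a))
    intro a
    have h1 := hn a
    have h0 := hn 0
    simp only [sub_self] at h0
    exact sub_eq_zero.1 (h1.trans h0.symm)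
  have hθaπ : ∀ a, θ (a, π) = θ (0, π) := by
    obtain ⟨n, hn⟩ := exists_int_of_exp_eq_one (fun a : ℝ => θ (a, π) - θ (0, π)) (by fun_prop)
      (fun a => hexp _ _ (hΦaπ a))
    intro a
    have h1 := hn a
    have h0 := hn 0
    simp only [sub_self] at h0
    exact sub_eq_zero.1 (h1.trans h0.symm)
  have hθR : ∀ a b, θ (a + π, -b) = θ (a, b) := by
    obtain ⟨n, hn⟩ := exists_int_of_exp_eq_one
      (fun z : ℝ × ℝ => θ (z.1 + π, -z.2) - θ z) (by fun_prop) (fun z => hexp _ _ (hΦρ _ _))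
    intro a b
    have h1 := hn (a, b)
    have h0 := hn (a, 0)
    simp only [neg_zero, hθa0 (a + π), hθa0 a, sub_self] at h0
    exact sub_eq_zero.1 (h1.trans h0.symm)
  have hθR' : ∀ a b, θ (a + π, -b + 2 * π) = θ (a, b) := by
    obtain ⟨n, hn⟩ := exists_int_of_exp_eq_one
      (fun z : ℝ × ℝ => θ (z.1 + π, -z.2 + 2 * π) - θ z) (by fun_prop)
      (fun z => hexp _ _ ((hΦ2 _ _).trans (hΦρ _ _)))
    intro a b
    have h1 := hn (a, b)
    have h0 := hn (a, π)
    simp only [show -π + 2 * π = π by ring, hθaπ (a + π), hθaπ a, sub_self] at h0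
    exact sub_eq_zero.1 (h1.trans h0.symm)
  have hθ2 : θ (0, π + π) = θ (0, 0) := by
    have h1 := hθR' (-π) 0
    have h2 := hθR (-π) 0
    rw [neg_add_cancel] at h1 h2
    rw [neg_zero] at h1 h2
    rw [← two_mul, ← zero_add (2 * π), h1, ← h2]
  obtain ⟨n, hn⟩ := exists_int_of_exp_eq_one
    (fun z : ℝ × ℝ => θ z - θ (z.1, z.2 + π) - (π * (1 + c z / ε) : ℝ) * Complex.I)
    (by fun_prop) (by
      rintro ⟨a, b⟩
      rw [Complex.exp_sub, Complex.exp_sub, hθΦ, hθΦ, hΦσ a b]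
      have h1 := hΦ0 (a, b + π)
      have h2 : g (a, b) ≠ 0 := Complex.exp_ne_zero _
      change g (a, b) * Φ (a, b + π) / Φ (a, b + π) / g (a, b) = 1
      field_simp)
  have h1 := hn (0, 0)
  have h2 := hn (0, π)
  have h3 := hcσ 0 0
  simp only [zero_add] at h1 h2 h3
  rw [hθ2, h3] at h2
  have h1 := congrArg Complex.im h1
  have h2 := congrArg Complex.im h2
  simp at h1 h2
  have h5 : π * (1 + c (0, 0) / ε) + π * (1 + -c (0, 0) / ε) = 2 * π := by ring
  have : π * (1 + 2 * n) = 0 := by linarith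
  have h6 : (1 + 2 * n : ℝ) = 0 := by
    rcases mul_eq_zero.1 this with h | h
    · exact absurd h pi_ne_zero
    · exact h
  have h7 : (1 + 2 * n : ℤ) = 0 := by exact_mod_cast h6
  omega

/-! ### Measures of lunes -/

/-- The open lune `{v ∈ S² : ⟪a, v⟫ > 0, ⟪b, v⟫ > 0}`; for `a = b` it is an open hemisphere. -/
def wedge (a b : EuclideanSpace ℝ (Fin 3)) : Set (sphere (0 : EuclideanSpace ℝ (Fin 3)) 1) :=
  {v | 0 < ⟪a, (v : EuclideanSpace ℝ (Fin 3))⟫ ∧ 0 < ⟪b, (v : EuclideanSpace ℝ (Fin 3))⟫}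

lemma isOpen_wedge (a b : EuclideanSpace ℝ (Fin 3)) : IsOpen (wedge a b) := by
  have h : ∀ c : EuclideanSpace ℝ (Fin 3), IsOpen {v : sphere (0 : EuclideanSpace ℝ (Fin 3)) 1 |
      0 < ⟪c, (v : EuclideanSpace ℝ (Fin 3))⟫} :=
    fun c => isOpen_lt continuous_const (by fun_prop)
  exact (h a).inter (h b)

lemma wedge_comm (a b : EuclideanSpace ℝ (Fin 3)) : wedge a b = wedge b a := by
  ext v
  exact and_comm

lemma IsProperSphereMeasure.ae_inner_ne
    {μ : Measure (sphere (0 : EuclideanSpace ℝ (Fin 3)) 1)} (hμ : IsProperSphereMeasure μ)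
    {a : EuclideanSpace ℝ (Fin 3)} (ha : a ≠ 0) :
    ∀ᵐ v : sphere (0 : EuclideanSpace ℝ (Fin 3)) 1 ∂μ,
      ⟪a, (v : EuclideanSpace ℝ (Fin 3))⟫ ≠ 0 := by
  rw [ae_iff]
  simpa only [ne_eq, not_not] using hμ.2 a 0 ha

section Measure

variable {μ : Measure (sphere (0 : EuclideanSpace ℝ (Fin 3)) 1)} [IsProbabilityMeasure μ]

/-- The measure of a lune depends continuously on its bounding planes, by dominated convergence:
the boundary planes are null. -/
lemma IsProperSphereMeasure.continuousAt_wedge (hμ : IsProperSphereMeasure μ)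
    {p : EuclideanSpace ℝ (Fin 3) × EuclideanSpace ℝ (Fin 3)} (ha : p.1 ≠ 0) (hb : p.2 ≠ 0) :
    ContinuousAt (fun q : EuclideanSpace ℝ (Fin 3) × EuclideanSpace ℝ (Fin 3) =>
      μ.real (wedge q.1 q.2)) p := by
  refine (ENNReal.tendsto_toReal (measure_ne_top μ _)).comp ?_
  refine tendsto_measure_of_ae_tendsto_indicator_of_isFiniteMeasure _
    (isOpen_wedge _ _).measurableSet (fun q => (isOpen_wedge _ _).measurableSet) ?_
  filter_upwards [hμ.ae_inner_ne ha, hμ.ae_inner_ne hb] with v hv1 hv2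
  -- Off the two boundary planes, the sign of each inner product is locally constant.
  have key : ∀ f : EuclideanSpace ℝ (Fin 3) × EuclideanSpace ℝ (Fin 3) → ℝ, Continuous f →
      f p ≠ 0 → ∀ᶠ q in nhds p, (0 < f q ↔ 0 < f p) := by
    intro f hf h0
    rcases lt_or_gt_of_ne h0 with h | h
    · filter_upwards [hf.continuousAt.eventually (gt_mem_nhds h)] with q hq
      exact iff_of_false (not_lt.2 hq.le) (not_lt.2 h.le)
    · filter_upwards [hf.continuousAt.eventually (lt_mem_nhds h)] with q hq
      exact iff_of_true hq h
  filter_upwards [key (fun q => ⟪q.1, (v : EuclideanSpace ℝ (Fin 3))⟫) (by fun_prop) hv1,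
    key (fun q => ⟪q.2, (v : EuclideanSpace ℝ (Fin 3))⟫) (by fun_prop) hv2] with q h1 h2
  exact and_congr h1 h2

lemma IsProperSphereMeasure.wedge_add_wedge_neg (hμ : IsProperSphereMeasure μ)
    (s : Set (sphere (0 : EuclideanSpace ℝ (Fin 3)) 1)) {b : EuclideanSpace ℝ (Fin 3)}
    (hb : b ≠ 0) :
    μ.real (s ∩ {v | 0 < ⟪b, (v : EuclideanSpace ℝ (Fin 3))⟫}) +
      μ.real (s ∩ {v | ⟪b, (v : EuclideanSpace ℝ (Fin 3))⟫ < 0}) = μ.real s := by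
  have hm : MeasurableSet {v : sphere (0 : EuclideanSpace ℝ (Fin 3)) 1 |
      0 < ⟪b, (v : EuclideanSpace ℝ (Fin 3))⟫} :=
    (isOpen_lt continuous_const (by fun_prop)).measurableSet
  rw [← measureReal_inter_add_sdiff (μ := μ) (s := s) hm]
  congr 1
  refine measureReal_congr ?_
  filter_upwards [hμ.ae_inner_ne hb] with v hv
  refine propext (and_congr_right fun _ => ?_)
  change _ ↔ ¬ (0 < ⟪b, (v : EuclideanSpace ℝ (Fin 3))⟫)
  rw [not_lt]
  exact ⟨fun h => le_of_lt h, fun h => lt_of_le_of_ne h hv⟩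

end Measure

/-- Orthonormal pairs `(y, n)` in `ℝ³`: `n` is the normal of a plane and `y` a unit vector in
that plane. -/
abbrev OrthoPair := {p : EuclideanSpace ℝ (Fin 3) × EuclideanSpace ℝ (Fin 3) //
  ⟪p.1, p.1⟫ = 1 ∧ ⟪p.2, p.2⟫ = 1 ∧ ⟪p.1, p.2⟫ = 0}

namespace OrthoPair

/-- The pair `(-y, n)`. -/
def negFst (p : OrthoPair) : OrthoPair :=
  ⟨(-p.1.1, p.1.2), by simpa using p.2⟩

/-- The pair `(-y, -n)`. -/
def negBoth (p : OrthoPair) : OrthoPair :=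
  ⟨(-p.1.1, -p.1.2), by simpa using p.2⟩

lemma continuous_negFst : Continuous negFst := by
  unfold negFst; fun_prop

lemma continuous_negBoth : Continuous negBoth := by
  unfold negBoth; fun_prop

lemma negFst_negFst (p : OrthoPair) : p.negFst.negFst = p := by
  simp [negFst]

lemma negBoth_negBoth (p : OrthoPair) : p.negBoth.negBoth = p := by
  simp [negBoth]

lemma negBoth_negFst (p : OrthoPair) : p.negBoth.negFst = p.negFst.negBoth := rfl

/-- The vector `sin t · y - cos t · n`, for which `⟪·, cos a · y + sin a · n⟫ = sin (t - a)`. -/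
noncomputable def dir (p : OrthoPair) (t : ℝ) : EuclideanSpace ℝ (Fin 3) :=
  Real.sin t • p.1.1 - Real.cos t • p.1.2

lemma continuous_dir : Continuous fun z : OrthoPair × ℝ => z.1.dir z.2 := by
  unfold dir; fun_prop

lemma inner_swap (p : OrthoPair) : ⟪p.1.2, p.1.1⟫ = 0 := by
  rw [real_inner_comm]; exact p.2.2.2

lemma dir_ne_zero (p : OrthoPair) (t : ℝ) : p.dir t ≠ 0 := by
  intro h
  have : ⟪p.dir t, p.dir t⟫ = 1 := by
    simp only [dir, inner_sub_left, inner_sub_right, real_inner_smul_left, real_inner_smul_right,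
      p.2.1, p.2.2.1, p.2.2.2, p.inner_swap]
    linear_combination Real.sin_sq_add_cos_sq t
  rw [h] at this
  simp at this

lemma snd_ne_zero (p : OrthoPair) : p.1.2 ≠ 0 := by
  intro h
  have := p.2.2.1
  rw [h] at this
  simp at this

lemma dir_pi (p : OrthoPair) : p.dir π = p.1.2 := by simp [dir]

instance : CompactSpace OrthoPair := by
  refine (isCompact_iff_compactSpace (s := {p : EuclideanSpace ℝ (Fin 3) ×
    EuclideanSpace ℝ (Fin 3) | ⟪p.1, p.1⟫ = 1 ∧ ⟪p.2, p.2⟫ = 1 ∧ ⟪p.1, p.2⟫ = 0})).1 ?_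
  refine IsCompact.of_isClosed_subset
    ((isCompact_closedBall (0 : EuclideanSpace ℝ (Fin 3)) 1).prod
      (isCompact_closedBall (0 : EuclideanSpace ℝ (Fin 3)) 1)) ?_ ?_
  · exact (isClosed_eq (by fun_prop) continuous_const).inter
      ((isClosed_eq (by fun_prop) continuous_const).inter
        (isClosed_eq (by fun_prop) continuous_const))
  · rintro p ⟨h1, h2, -⟩
    rw [real_inner_self_eq_norm_sq] at h1 h2
    rw [pow_eq_one_iff_of_nonneg (norm_nonneg _) two_ne_zero] at h1
    rw [pow_eq_one_iff_of_nonneg (norm_nonneg _) two_ne_zero] at h2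
    exact ⟨by simp [h1], by simp [h2]⟩

variable (μ : Measure (sphere (0 : EuclideanSpace ℝ (Fin 3)) 1))

/-- The measure of the lune swept, from the half-plane through `y`, by rotating by the angle `t`
towards `n`. -/
noncomputable def sweep (p : OrthoPair) (t : ℝ) : ℝ := μ.real (wedge p.1.2 (p.dir t))

variable {μ}

lemma sweep_zero (p : OrthoPair) : sweep μ p 0 = 0 := by
  have : wedge p.1.2 (p.dir 0) = ∅ := by
    ext v
    simp only [wedge, dir, Real.sin_zero, Real.cos_zero, zero_smul, one_smul, zero_sub,
      inner_neg_left, Set.mem_ofPred_eq, Set.mem_empty_iff_false, iff_false, not_and]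
    intro h; linarith
  simp [sweep, this]

variable [IsProbabilityMeasure μ]

lemma continuous_sweep (hμ : IsProperSphereMeasure μ) :
    Continuous fun z : OrthoPair × ℝ => sweep μ z.1 z.2 := by
  rw [continuous_iff_continuousAt]
  intro z
  have h1 := hμ.continuousAt_wedge (p := (z.1.1.2, z.1.dir z.2)) z.1.snd_ne_zero
    (z.1.dir_ne_zero _)
  have h2 : Continuous fun z : OrthoPair × ℝ => (z.1.1.2, z.1.dir z.2) :=
    Continuous.prodMk (by fun_prop) continuous_dir
  exact ContinuousAt.comp (f := fun z : OrthoPair × ℝ => (z.1.1.2, z.1.dir z.2)) h1 h2.continuousAt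

lemma continuous_sweep_left (hμ : IsProperSphereMeasure μ) (t : ℝ) :
    Continuous fun p : OrthoPair => sweep μ p t :=
  Continuous.comp (f := fun p : OrthoPair => (p, t)) (continuous_sweep hμ)
    (Continuous.prodMk_left t)

lemma wedge_subset (p : OrthoPair) {t t' : ℝ} (h0 : 0 ≤ t) (h : t < t') (hπ : t' ≤ π) :
    wedge p.1.2 (p.dir t) ⊆ wedge p.1.2 (p.dir t') := by
  rintro v ⟨h1, h2⟩
  refine ⟨h1, ?_⟩
  simp only [dir, inner_sub_left, real_inner_smul_left] at h1 h2 ⊢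
  rcases h0.eq_or_lt with rfl | h0
  · simp at h2; linarith
  have hs : 0 < Real.sin t := Real.sin_pos_of_pos_of_lt_pi h0 (by linarith)
  have hs' : 0 ≤ Real.sin t' := Real.sin_nonneg_of_nonneg_of_le_pi (by linarith) hπ
  have hd : 0 < Real.sin (t' - t) := Real.sin_pos_of_pos_of_lt_pi (by linarith) (by linarith)
  rw [Real.sin_sub] at hd
  refine pos_of_mul_pos_right ?_ hs.le
  nlinarith [mul_nonneg hs' h2.le, mul_pos hd h1]

lemma sweep_lt (hμ : IsProperSphereMeasure μ) (p : OrthoPair) {t t' : ℝ} (h0 : 0 ≤ t)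
    (h : t < t') (hπ : t' ≤ π) : sweep μ p t < sweep μ p t' := by
  set D : Set (sphere (0 : EuclideanSpace ℝ (Fin 3)) 1) :=
    wedge p.1.2 (p.dir t') ∩ {v | ⟪p.dir t, (v : EuclideanSpace ℝ (Fin 3))⟫ < 0} with hD
  -- The strict inequality comes from the nonempty open lune `D` between the two angles.
  have hDo : IsOpen D :=
    (isOpen_wedge _ _).inter (isOpen_lt (by fun_prop) continuous_const)
  have hin : ∀ s m, ⟪p.dir s, Real.cos m • p.1.1 + Real.sin m • p.1.2⟫ = Real.sin (s - m) := by
    intro s m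
    simp only [dir, inner_sub_left, inner_add_right, real_inner_smul_left, real_inner_smul_right,
      p.2.1, p.2.2.1, p.2.2.2, p.inner_swap, Real.sin_sub]
    ring
  have hDne : D.Nonempty := by
    let m := (t + t') / 2
    have hm1 : t < m := by simp only [m]; linarith
    have hm2 : m < t' := by simp only [m]; linarith
    refine ⟨⟨Real.cos m • p.1.1 + Real.sin m • p.1.2, ?_⟩, ⟨?_, ?_⟩, ?_⟩
    · rw [mem_sphere_zero_iff_norm]
      have : ‖Real.cos m • p.1.1 + Real.sin m • p.1.2‖ ^ 2 = 1 := by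
        rw [← real_inner_self_eq_norm_sq]
        simp only [inner_add_left, inner_add_right, real_inner_smul_left, real_inner_smul_right,
          p.2.1, p.2.2.1, p.2.2.2, p.inner_swap]
        linear_combination Real.sin_sq_add_cos_sq m
      rwa [pow_eq_one_iff_of_nonneg (norm_nonneg _) two_ne_zero] at this
    · show 0 < ⟪p.1.2, Real.cos m • p.1.1 + Real.sin m • p.1.2⟫
      have hπm := hin π m
      rw [dir_pi] at hπm
      rw [hπm]
      exact Real.sin_pos_of_pos_of_lt_pi (by linarith) (by linarith)
    · show 0 < ⟪p.dir t', Real.cos m • p.1.1 + Real.sin m • p.1.2⟫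
      rw [hin]
      exact Real.sin_pos_of_pos_of_lt_pi (by linarith) (by linarith)
    · show ⟪p.dir t, Real.cos m • p.1.1 + Real.sin m • p.1.2⟫ < 0
      rw [hin]
      exact Real.sin_neg_of_neg_of_neg_pi_lt (by linarith) (by linarith)
  have hpos : 0 < μ.real D := ENNReal.toReal_pos (hμ.1 D hDo hDne).ne' (measure_ne_top μ _)
  have hsum := hμ.wedge_add_wedge_neg (wedge p.1.2 (p.dir t')) (p.dir_ne_zero t)
  have hle : sweep μ p t ≤ μ.real (wedge p.1.2 (p.dir t') ∩
      {v | 0 < ⟪p.dir t, (v : EuclideanSpace ℝ (Fin 3))⟫}) :=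
    measureReal_mono (fun v hv => ⟨wedge_subset p h0 h hπ hv, hv.2⟩)
  rw [← hD] at hsum
  unfold sweep at hle ⊢
  linarith

/-- The measure of the lune between two angles is the difference of the sweeps. -/
lemma measure_wedge_neg_dir (hμ : IsProperSphereMeasure μ) (p : OrthoPair) {t t' : ℝ} (h0 : 0 < t)
    (h : t < t') (hπ : t' < π) :
    μ.real (wedge (-p.dir t) (p.dir t')) = sweep μ p t' - sweep μ p t := by
  have hsum := hμ.wedge_add_wedge_neg (wedge p.1.2 (p.dir t')) (p.dir_ne_zero t)
  have e1 : wedge p.1.2 (p.dir t') ∩ {v | 0 < ⟪p.dir t, (v : EuclideanSpace ℝ (Fin 3))⟫} =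
      wedge p.1.2 (p.dir t) := by
    ext v
    exact ⟨fun hv => ⟨hv.1.1, hv.2⟩, fun hv => ⟨wedge_subset p h0.le h hπ.le hv, hv.2⟩⟩
  have e2 : wedge p.1.2 (p.dir t') ∩ {v | ⟪p.dir t, (v : EuclideanSpace ℝ (Fin 3))⟫ < 0} =
      wedge (-p.dir t) (p.dir t') := by
    ext v
    constructor
    · rintro ⟨⟨h1, h2⟩, h3⟩
      refine ⟨?_, h2⟩
      rw [inner_neg_left]
      exact neg_pos.2 h3
    · rintro ⟨h3, h2⟩
      rw [inner_neg_left, neg_pos] at h3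
      refine ⟨⟨?_, h2⟩, h3⟩
      simp only [dir, inner_sub_left, real_inner_smul_left] at h2 h3
      have hs : 0 < Real.sin t := Real.sin_pos_of_pos_of_lt_pi h0 (by linarith)
      have hs' : 0 < Real.sin t' := Real.sin_pos_of_pos_of_lt_pi (by linarith) hπ
      have hd : 0 < Real.sin (t' - t) := Real.sin_pos_of_pos_of_lt_pi (by linarith) (by linarith)
      refine pos_of_mul_pos_right ?_ hd.le
      rw [Real.sin_sub]
      nlinarith [mul_pos hs h2, mul_pos hs' (neg_pos.2 h3)]
  rw [e1, e2] at hsum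
  unfold sweep
  linarith

/-- The lunes swept by `π - t` from `y` and by `t` from `-y` fill the hemisphere around `n`. -/
lemma sweep_negFst (hμ : IsProperSphereMeasure μ) (p : OrthoPair) (t : ℝ) :
    sweep μ p (π - t) = sweep μ p π - sweep μ p.negFst t := by
  have hsum := hμ.wedge_add_wedge_neg (wedge p.1.2 p.1.2) (p.dir_ne_zero (π - t))
  have e1 : wedge p.1.2 p.1.2 ∩ {v | 0 < ⟪p.dir (π - t), (v : EuclideanSpace ℝ (Fin 3))⟫} =
      wedge p.1.2 (p.dir (π - t)) := by
    ext v
    exact ⟨fun hv => ⟨hv.1.1, hv.2⟩, fun hv => ⟨⟨hv.1, hv.1⟩, hv.2⟩⟩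
  have e2 : wedge p.1.2 p.1.2 ∩ {v | ⟪p.dir (π - t), (v : EuclideanSpace ℝ (Fin 3))⟫ < 0} =
      wedge p.negFst.1.2 (p.negFst.dir t) := by
    have hd : p.negFst.dir t = - p.dir (π - t) := by
      simp [dir, negFst, Real.sin_pi_sub, Real.cos_pi_sub]
      abel
    ext v
    rw [hd]
    simp only [wedge, Set.mem_inter_iff, Set.mem_ofPred_eq, inner_neg_left, neg_pos, and_self]
    rfl
  rw [e1, e2] at hsum
  rw [sweep, sweep, sweep, dir_pi]
  linarith

lemma sweep_negBoth_pi (hμ : IsProperSphereMeasure μ) (p : OrthoPair) :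
    sweep μ p.negBoth π = 1 - sweep μ p π := by
  have hsum := hμ.wedge_add_wedge_neg Set.univ p.snd_ne_zero
  rw [probReal_univ] at hsum
  rw [sweep, sweep, dir_pi, dir_pi]
  have e1 : Set.univ ∩ {v : sphere (0 : EuclideanSpace ℝ (Fin 3)) 1 |
      0 < ⟪p.1.2, (v : EuclideanSpace ℝ (Fin 3))⟫} = wedge p.1.2 p.1.2 := by
    ext v; simp [wedge]
  have e2 : Set.univ ∩ {v : sphere (0 : EuclideanSpace ℝ (Fin 3)) 1 |
      ⟪p.1.2, (v : EuclideanSpace ℝ (Fin 3))⟫ < 0} = wedge p.negBoth.1.2 p.negBoth.1.2 := by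
    ext v; simp [wedge, negBoth]
  rw [e1, e2] at hsum
  linarith

lemma exists_quarter (hμ : IsProperSphereMeasure μ) (p : OrthoPair) :
    ∃ t, 0 < t ∧ t < π ∧ sweep μ p t = sweep μ p π / 4 := by
  have hpos := sweep_lt hμ p le_rfl pi_pos le_rfl
  rw [sweep_zero] at hpos
  have hc : ContinuousOn (fun t => sweep μ p t) (Set.Icc 0 π) :=
    ((continuous_sweep hμ).comp (Continuous.prodMk continuous_const continuous_id)).continuousOn
  obtain ⟨t, ht, h⟩ := intermediate_value_Icc pi_pos.le hc
    (show sweep μ p π / 4 ∈ Set.Icc (sweep μ p 0) (sweep μ p π) by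
      rw [sweep_zero]; constructor <;> linarith)
  refine ⟨t, lt_of_le_of_ne ht.1 ?_, lt_of_le_of_ne ht.2 ?_, h⟩
  · rintro rfl
    simp only [sweep_zero] at h; linarith
  · rintro rfl
    simp only at h; linarith

/-- The angle at which the swept lune takes up a quarter of the hemisphere around `n`. -/
noncomputable def quarterAngle (hμ : IsProperSphereMeasure μ) (p : OrthoPair) : ℝ :=
  (exists_quarter hμ p).choose

lemma quarterAngle_pos (hμ : IsProperSphereMeasure μ) (p : OrthoPair) :
    0 < quarterAngle hμ p := (exists_quarter hμ p).choose_spec.1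

lemma quarterAngle_lt_pi (hμ : IsProperSphereMeasure μ) (p : OrthoPair) :
    quarterAngle hμ p < π := (exists_quarter hμ p).choose_spec.2.1

lemma sweep_quarterAngle (hμ : IsProperSphereMeasure μ) (p : OrthoPair) :
    sweep μ p (quarterAngle hμ p) = sweep μ p π / 4 := (exists_quarter hμ p).choose_spec.2.2

/-- The quarter angle solves an equation strictly increasing in the angle and continuous in the
pair, hence is continuous. -/
lemma continuous_quarterAngle (hμ : IsProperSphereMeasure μ) : Continuous (quarterAngle hμ) := by
  have hcont := continuous_sweep_left hμ
  have hmono : ∀ p : OrthoPair, StrictMonoOn (fun t => sweep μ p t) (Set.Icc 0 π) :=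
    fun p s hs t ht hst => sweep_lt hμ p hs.1 hst ht.2
  have hmem : ∀ p, quarterAngle hμ p ∈ Set.Icc 0 π := fun p =>
    ⟨(quarterAngle_pos hμ p).le, (quarterAngle_lt_pi hμ p).le⟩
  rw [continuous_iff_continuousAt]
  intro p
  refine tendsto_order.2 ⟨fun a ha => ?_, fun a ha => ?_⟩
  · rcases lt_or_ge a 0 with h0 | h0
    · exact Filter.Eventually.of_forall fun q => h0.trans (quarterAngle_pos hμ q)
    have hm : a ∈ Set.Icc 0 π := ⟨h0, (ha.trans (quarterAngle_lt_pi hμ p)).le⟩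
    have h1 : sweep μ p a < sweep μ p π / 4 := by
      rw [← sweep_quarterAngle hμ]; exact hmono p hm (hmem p) ha
    filter_upwards [(isOpen_lt (hcont a) ((hcont π).div_const 4)).mem_nhds h1] with q hq
    have hq : sweep μ q a < sweep μ q π / 4 := hq
    rw [← sweep_quarterAngle hμ] at hq
    exact ((hmono q).lt_iff_lt hm (hmem q)).1 hq
  · rcases lt_or_ge π a with h0 | h0
    · exact Filter.Eventually.of_forall fun q => (quarterAngle_lt_pi hμ q).trans h0
    have hm : a ∈ Set.Icc 0 π := ⟨((quarterAngle_pos hμ p).trans ha).le, h0⟩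
    have h1 : sweep μ p π / 4 < sweep μ p a := by
      rw [← sweep_quarterAngle hμ]; exact hmono p (hmem p) hm ha
    filter_upwards [(isOpen_lt ((hcont π).div_const 4) (hcont a)).mem_nhds h1] with q hq
    have hq : sweep μ q π / 4 < sweep μ q a := hq
    rw [← sweep_quarterAngle hμ] at hq
    exact ((hmono q).lt_iff_lt (hmem q) hm).1 hq

/-- Difference of the quarter angles of `(y, n)` and of the opposite pair `(-y, -n)`; it vanishes
when a single plane cuts off both quarters. -/
noncomputable def defect (hμ : IsProperSphereMeasure μ) (p : OrthoPair) : ℝ :=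
  quarterAngle hμ p - quarterAngle hμ p.negBoth

lemma continuous_defect (hμ : IsProperSphereMeasure μ) : Continuous (defect hμ) :=
  (continuous_quarterAngle hμ).sub ((continuous_quarterAngle hμ).comp continuous_negBoth)

lemma defect_negBoth (hμ : IsProperSphereMeasure μ) (p : OrthoPair) :
    defect hμ p.negBoth = - defect hμ p := by
  simp [defect, negBoth_negBoth]

end OrthoPair

/-! ### Orthonormal frames and the simultaneous zero -/

/-- Orthonormal frames `(n, e, f)` of `ℝ³`. -/
abbrev OrthoFrame := {q : EuclideanSpace ℝ (Fin 3) × EuclideanSpace ℝ (Fin 3) ×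
    EuclideanSpace ℝ (Fin 3) //
  ⟪q.1, q.1⟫ = 1 ∧ ⟪q.2.1, q.2.1⟫ = 1 ∧ ⟪q.2.2, q.2.2⟫ = 1 ∧
    ⟪q.1, q.2.1⟫ = 0 ∧ ⟪q.1, q.2.2⟫ = 0 ∧ ⟪q.2.1, q.2.2⟫ = 0}

namespace OrthoFrame

lemma inner_swaps (q : OrthoFrame) :
    ⟪q.1.2.1, q.1.1⟫ = 0 ∧ ⟪q.1.2.2, q.1.1⟫ = 0 ∧ ⟪q.1.2.2, q.1.2.1⟫ = 0 := by
  obtain ⟨-, -, -, h1, h2, h3⟩ := q.2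
  exact ⟨by rwa [real_inner_comm], by rwa [real_inner_comm], by rwa [real_inner_comm]⟩

/-- The half-turn about `f`, i.e. the frame `(-n, -e, f)`. -/
def flip (q : OrthoFrame) : OrthoFrame :=
  ⟨(-q.1.1, -q.1.2.1, q.1.2.2), by simpa using q.2⟩

/-- Rotation of the frame by the angle `t` about its first vector `n`. -/
noncomputable def spin (t : ℝ) (q : OrthoFrame) : OrthoFrame :=
  ⟨(q.1.1, Real.cos t • q.1.2.1 + Real.sin t • q.1.2.2,
    -(Real.sin t • q.1.2.1) + Real.cos t • q.1.2.2), by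
    obtain ⟨h1, h2, h3, h4, h5, h6⟩ := q.2
    obtain ⟨h7, h8, h9⟩ := q.inner_swaps
    simp only [inner_add_left, inner_add_right, inner_neg_left, inner_neg_right,
      real_inner_smul_left, real_inner_smul_right, h1, h2, h3, h4, h5, h6, h9]
    refine ⟨trivial, ?_, ?_, ?_, ?_, ?_⟩
    · linear_combination Real.sin_sq_add_cos_sq t
    · linear_combination Real.sin_sq_add_cos_sq t
    all_goals ring⟩

/-- The orthonormal pair `(y, n)` with `y = cos φ · e + sin φ · f`. -/
noncomputable def toPair (q : OrthoFrame) (φ : ℝ) : OrthoPair :=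
  ⟨(Real.cos φ • q.1.2.1 + Real.sin φ • q.1.2.2, q.1.1), by
    obtain ⟨h1, h2, h3, h4, h5, h6⟩ := q.2
    obtain ⟨h7, h8, h9⟩ := q.inner_swaps
    simp only [inner_add_left, inner_add_right,
      real_inner_smul_left, real_inner_smul_right, h1, h2, h3, h6, h7, h8, h9]
    refine ⟨?_, trivial, ?_⟩
    · linear_combination Real.sin_sq_add_cos_sq φ
    · ring⟩

/-- The frame in spherical coordinates: `n` has longitude `a` and polar angle `b`, and `e`, `f` are
the unit tangent vectors in the directions of increasing `b` and `a`. All real `b` are allowed. -/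
noncomputable def spherical (z : ℝ × ℝ) : OrthoFrame :=
  let v := EuclideanSpace.basisFun (Fin 3) ℝ
  ⟨(Real.sin z.2 • (Real.cos z.1 • v 0 + Real.sin z.1 • v 1) + Real.cos z.2 • v 2,
    Real.cos z.2 • (Real.cos z.1 • v 0 + Real.sin z.1 • v 1) - Real.sin z.2 • v 2,
    -(Real.sin z.1 • v 0) + Real.cos z.1 • v 1), by
    have hv : ∀ i j, ⟪v i, v j⟫ = if i = j then 1 else 0 := orthonormal_iff_ite.1 v.orthonormal
    have h1 := Real.sin_sq_add_cos_sq z.1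
    have h2 := Real.sin_sq_add_cos_sq z.2
    simp only [inner_add_left, inner_add_right, inner_sub_left, inner_sub_right, inner_neg_left,
      inner_neg_right, real_inner_smul_left, real_inner_smul_right, hv]
    simp
    refine ⟨?_, ?_, ?_, ?_, ?_, ?_⟩
    · linear_combination Real.sin z.2 ^ 2 * h1 + h2
    · linear_combination Real.cos z.2 ^ 2 * h1 + h2
    · linear_combination h1
    · linear_combination Real.sin z.2 * Real.cos z.2 * h1
    all_goals ring⟩

lemma continuous_flip : Continuous flip := by
  unfold flip; fun_prop

lemma continuous_spin (q : OrthoFrame) : Continuous fun t => spin t q := by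
  unfold spin; fun_prop

lemma continuous_toPair : Continuous fun z : OrthoFrame × ℝ => z.1.toPair z.2 := by
  unfold toPair; fun_prop

lemma continuous_toPair_comp {c : ℝ → OrthoFrame} (hc : Continuous c) :
    Continuous fun z : ℝ × ℝ => (c z.1).toPair z.2 := by
  unfold toPair; fun_prop

lemma continuous_spherical : Continuous spherical := by
  unfold spherical; fun_prop

lemma spherical_add_pi_neg (a b : ℝ) : spherical (a + π, -b) = spin π (spherical (a, b)) := by
  apply Subtype.ext
  refine Prod.ext ?_ (Prod.ext ?_ ?_)
  all_goals
    simp only [spherical, spin, Real.cos_add_pi, Real.sin_add_pi, Real.cos_neg, Real.sin_neg,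
      Real.cos_pi, Real.sin_pi]
    module

lemma spherical_add_pi (a b : ℝ) : spherical (a, b + π) = flip (spherical (a, b)) := by
  apply Subtype.ext
  refine Prod.ext ?_ (Prod.ext ?_ ?_)
  all_goals
    simp only [spherical, flip, Real.cos_add_pi, Real.sin_add_pi]
  all_goals module

lemma spherical_zero (a : ℝ) : spherical (a, 0) = spin a (spherical (0, 0)) := by
  apply Subtype.ext
  refine Prod.ext ?_ (Prod.ext ?_ ?_)
  all_goals
    simp only [spherical, spin, Real.cos_zero, Real.sin_zero]
    module

lemma flip_flip (q : OrthoFrame) : q.flip.flip = q := by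
  simp [flip]

lemma spin_zero (q : OrthoFrame) : spin 0 q = q := by
  simp [spin]

lemma toPair_add_pi (q : OrthoFrame) (φ : ℝ) : q.toPair (φ + π) = (q.toPair φ).negFst := by
  apply Subtype.ext
  refine Prod.ext ?_ rfl
  simp only [toPair, OrthoPair.negFst, Real.cos_add_pi, Real.sin_add_pi]
  module

lemma toPair_flip (q : OrthoFrame) (φ : ℝ) : q.flip.toPair φ = (q.toPair (-φ)).negBoth := by
  apply Subtype.ext
  refine Prod.ext ?_ rfl
  simp only [toPair, flip, OrthoPair.negBoth, Real.cos_neg, Real.sin_neg]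
  module

lemma sweep_toPair_pi (μ : Measure (sphere (0 : EuclideanSpace ℝ (Fin 3)) 1)) (q : OrthoFrame)
    (φ : ℝ) : OrthoPair.sweep μ (q.toPair φ) π = μ.real (wedge q.1.1 q.1.1) := by
  rw [OrthoPair.sweep, OrthoPair.dir_pi]
  rfl

/-- The amount by which the measure of the open hemisphere around `n` exceeds `1 / 2`. -/
noncomputable def excess (μ : Measure (sphere (0 : EuclideanSpace ℝ (Fin 3)) 1))
    (q : OrthoFrame) : ℝ :=
  μ.real (wedge q.1.1 q.1.1) - 1 / 2

lemma excess_spin {μ : Measure (sphere (0 : EuclideanSpace ℝ (Fin 3)) 1)} (t : ℝ)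
    (q : OrthoFrame) : excess μ (spin t q) = excess μ q := rfl

variable {μ : Measure (sphere (0 : EuclideanSpace ℝ (Fin 3)) 1)} [IsProbabilityMeasure μ]

lemma continuous_excess (hμ : IsProperSphereMeasure μ) : Continuous (excess μ) := by
  have h : Continuous fun q : OrthoFrame => q.toPair 0 :=
    Continuous.comp (f := fun q : OrthoFrame => (q, (0 : ℝ))) continuous_toPair
      (Continuous.prodMk_left 0)
  have h2 : Continuous fun q : OrthoFrame => OrthoPair.sweep μ (q.toPair 0) π - 1 / 2 :=
    ((OrthoPair.continuous_sweep_left hμ π).comp h).sub continuous_const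
  simp only [sweep_toPair_pi] at h2
  exact h2

lemma excess_flip (hμ : IsProperSphereMeasure μ) (q : OrthoFrame) :
    excess μ q.flip = -excess μ q := by
  rw [excess, excess, ← sweep_toPair_pi μ _ 0, ← sweep_toPair_pi μ _ 0, toPair_flip, neg_zero,
    OrthoPair.sweep_negBoth_pi hμ]
  ring

/-- Some frame is joined to its half-turn through frames whose plane almost bisects `μ`. -/
lemma exists_joinedIn_flip (hμ : IsProperSphereMeasure μ) {ε : ℝ} (hε : 0 < ε) :
    ∃ q, JoinedIn {q | |excess μ q| < ε} q q.flip :=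
  exists_joinedIn_antipode (excess μ) flip spin spherical (continuous_excess hμ) continuous_flip
    continuous_spherical continuous_spin spin_zero (excess_flip hμ) excess_spin flip_flip
    spherical_add_pi_neg spherical_add_pi spherical_zero hε

end OrthoFrame

namespace OrthoPair

variable {μ : Measure (sphere (0 : EuclideanSpace ℝ (Fin 3)) 1)} [IsProbabilityMeasure μ]

/-- Along any path of frames from `q` to `q.flip`, both defects vanish simultaneously for some pair
`(cos φ · e + sin φ · f, n)` built from a frame `(n, e, f)` on the path. -/
lemma exists_defect_eq_zero_of_path (hμ : IsProperSphereMeasure μ) {c : ℝ → OrthoFrame}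
    (hc : Continuous c) (hc1 : c 1 = (c 0).flip) :
    ∃ s φ, defect hμ ((c s).toPair φ) = 0 ∧ defect hμ ((c s).toPair φ).negFst = 0 := by
  obtain ⟨Y, hYc⟩ : ∃ Y : ℝ × ℝ → OrthoPair, ∀ z, Y z = (c z.1).toPair z.2 := ⟨_, fun _ => rfl⟩
  have hY : Continuous Y := by
    rw [funext hYc]
    exact OrthoFrame.continuous_toPair_comp hc
  have hA : Continuous fun z => defect hμ (Y z) := (continuous_defect hμ).comp hY
  have hB : Continuous fun z => defect hμ (Y z).negFst :=
    (continuous_defect hμ).comp (continuous_negFst.comp hY)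
  -- Passing from `y` to `-y` swaps the two defects and passing to the opposite pair negates both;
  -- these are the two symmetries required of the complex combination below.
  obtain ⟨⟨s, φ⟩, hz⟩ := exists_zero_of_klein_symm
    (fun z => ((defect hμ (Y z) + defect hμ (Y z).negFst : ℝ) : ℂ) +
      ((defect hμ (Y z) - defect hμ (Y z).negFst : ℝ) : ℂ) * Complex.I)
    (by fun_prop)
    (by
      intro s φ
      have : Y (s, φ + π) = (Y (s, φ)).negFst := by
        rw [hYc, hYc]
        exact OrthoFrame.toPair_add_pi _ _
      simp only [this, negFst_negFst]
      apply Complex.ext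
      · simp; ring
      · simp)
    (by
      intro φ
      have : Y (1, φ) = (Y (0, -φ)).negBoth := by
        rw [hYc, hYc, hc1]
        exact OrthoFrame.toPair_flip _ _
      simp only [this, negBoth_negFst, defect_negBoth]
      apply Complex.ext <;> simp <;> ring)
  have h1 := congrArg Complex.re hz
  have h2 := congrArg Complex.im hz
  simp at h1 h2
  rw [hYc] at h1 h2
  exact ⟨s, φ, by linarith, by linarith⟩

/-- Both defects vanish at some plane whose hemispheres have measures within `ε` of `1 / 2`. -/
lemma exists_defect_eq_zero_near (hμ : IsProperSphereMeasure μ) {ε : ℝ} (hε : 0 < ε) :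
    ∃ p : OrthoPair, defect hμ p = 0 ∧ defect hμ p.negFst = 0 ∧ |sweep μ p π - 1 / 2| < ε := by
  obtain ⟨q, hq⟩ := OrthoFrame.exists_joinedIn_flip hμ hε
  obtain ⟨γ, hγ⟩ : ∃ γ : Path q q.flip, ∀ s, |OrthoFrame.excess μ (γ s)| < ε :=
    ⟨hq.somePath, hq.somePath_mem⟩
  obtain ⟨s, φ, h1, h2⟩ := exists_defect_eq_zero_of_path hμ γ.continuous_extend
    (by rw [Path.extend_one, Path.extend_zero])
  refine ⟨_, h1, h2, ?_⟩
  rw [OrthoFrame.sweep_toPair_pi]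
  exact hγ (Set.projIcc 0 1 zero_le_one s)

/-- There is a bisecting plane at which both defects vanish: minimize the imbalance of the
hemispheres over the compact set of common zeros of the defects. -/
lemma exists_defect_eq_zero (hμ : IsProperSphereMeasure μ) :
    ∃ p : OrthoPair, defect hμ p = 0 ∧ defect hμ p.negFst = 0 ∧ sweep μ p π = 1 / 2 := by
  have hZ : IsCompact {p : OrthoPair | defect hμ p = 0 ∧ defect hμ p.negFst = 0} :=
    ((isClosed_eq (continuous_defect hμ) continuous_const).inter
      (isClosed_eq ((continuous_defect hμ).comp continuous_negFst) continuous_const)).isCompact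
  have hc : Continuous fun p : OrthoPair => |sweep μ p π - 1 / 2| :=
    ((continuous_sweep_left hμ π).sub continuous_const).abs
  obtain ⟨p0, hp0, hp0', -⟩ := exists_defect_eq_zero_near hμ one_pos
  obtain ⟨p, ⟨hp1, hp2⟩, hmin⟩ := hZ.exists_isMinOn ⟨p0, hp0, hp0'⟩ hc.continuousOn
  refine ⟨p, hp1, hp2, ?_⟩
  by_contra hne
  obtain ⟨q, hq1, hq2, hq⟩ := exists_defect_eq_zero_near hμ (abs_pos.2 (sub_ne_zero.2 hne))
  exact absurd (hmin ⟨hq1, hq2⟩) (not_le.2 hq)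

/-! ### Angular sectors as lunes -/

/-- An angular sector of opening at most `π` is the lune between its two bounding planes. -/
lemma angularSector_eq_wedge (p : OrthoPair) {x : EuclideanSpace ℝ (Fin 3)}
    (hxy : ⟪p.1.1, x⟫ = 0) (hxn : ⟪p.1.2, x⟫ = 0)
    (hx : ∀ v : EuclideanSpace ℝ (Fin 3), v = ⟪x, v⟫ • x + ⟪p.1.1, v⟫ • p.1.1 + ⟪p.1.2, v⟫ • p.1.2)
    {t₁ t₂ : ℝ} (h : t₁ < t₂) (hπ : t₂ ≤ t₁ + π) :
    angularSector x p.1.1 p.1.2 t₁ t₂ = wedge (-p.dir t₁) (p.dir t₂) := by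
  ext v
  constructor
  · rintro ⟨s, c, t, hc, h1, h2, hv⟩
    have hin : ∀ r, ⟪p.dir r, (v : EuclideanSpace ℝ (Fin 3))⟫ = c * Real.sin (r - t) := by
      intro r
      rw [hv]
      simp only [dir, inner_sub_left, inner_add_right, real_inner_smul_left, real_inner_smul_right,
        p.2.1, p.2.2.1, p.2.2.2, p.inner_swap, hxy, hxn, Real.sin_sub]
      ring
    refine ⟨?_, ?_⟩
    · rw [inner_neg_left, hin, ← mul_neg, ← Real.sin_neg]
      exact mul_pos hc (Real.sin_pos_of_pos_of_lt_pi (by linarith) (by linarith))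
    · rw [hin]
      exact mul_pos hc (Real.sin_pos_of_pos_of_lt_pi (by linarith) (by linarith))
  · rintro ⟨h1, h2⟩
    simp only [dir, inner_neg_left, inner_sub_left, real_inner_smul_left] at h1 h2
    set a := ⟪p.1.1, (v : EuclideanSpace ℝ (Fin 3))⟫ with ha
    set b := ⟪p.1.2, (v : EuclideanSpace ℝ (Fin 3))⟫ with hb
    -- Polar coordinates relative to the first bounding half-plane.
    let z : ℂ := ⟨Real.cos t₁ * a + Real.sin t₁ * b, Real.cos t₁ * b - Real.sin t₁ * a⟩
    have hz : 0 < z.im := by simp only [z]; linarith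
    have hz0 : z ≠ 0 := fun h0 => by rw [h0] at hz; simp at hz
    have hc : 0 < ‖z‖ := norm_pos_iff.2 hz0
    have hre : ‖z‖ * Real.cos z.arg = Real.cos t₁ * a + Real.sin t₁ * b :=
      Complex.norm_mul_cos_arg z
    have him : ‖z‖ * Real.sin z.arg = Real.cos t₁ * b - Real.sin t₁ * a :=
      Complex.norm_mul_sin_arg z
    have harg : 0 < z.arg := by
      refine lt_of_le_of_ne (Complex.arg_nonneg_iff.2 hz.le) fun h0 => ?_
      rw [← h0, Real.sin_zero, mul_zero] at him
      exact hz.ne him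
    have hargπ := Complex.arg_le_pi z
    have hsc := Real.sin_sq_add_cos_sq t₁
    have ha' : a = ‖z‖ * Real.cos (t₁ + z.arg) := by
      rw [Real.cos_add]
      linear_combination - a * hsc - Real.cos t₁ * hre + Real.sin t₁ * him
    have hb' : b = ‖z‖ * Real.sin (t₁ + z.arg) := by
      rw [Real.sin_add]
      linear_combination - b * hsc - Real.sin t₁ * hre - Real.cos t₁ * him
    refine ⟨⟪x, (v : EuclideanSpace ℝ (Fin 3))⟫, ‖z‖, t₁ + z.arg, hc, by linarith, ?_, ?_⟩
    · by_contra! hle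
      have hs : 0 < ‖z‖ * Real.sin (t₂ - (t₁ + z.arg)) := by
        rw [Real.sin_sub]
        rw [ha', hb'] at h2
        linarith
      have := Real.sin_nonpos_of_nonpos_of_neg_pi_le (x := t₂ - (t₁ + z.arg)) (by linarith)
        (by linarith)
      exact absurd hs (not_lt.2 (mul_nonpos_of_nonneg_of_nonpos hc.le this))
    · rw [smul_add, smul_smul, smul_smul, ← ha', ← hb', ← add_assoc]
      exact hx _

/-- The axis `x` completing `(y, n)` to an orthonormal basis, with the expansion in that basis. -/
lemma exists_axis (p : OrthoPair) : ∃ x : EuclideanSpace ℝ (Fin 3),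
    ‖x‖ = 1 ∧ ⟪p.1.1, x⟫ = 0 ∧ ⟪p.1.2, x⟫ = 0 ∧
    ∀ v : EuclideanSpace ℝ (Fin 3), v = ⟪x, v⟫ • x + ⟪p.1.1, v⟫ • p.1.1 + ⟪p.1.2, v⟫ • p.1.2 := by
  have ho : Orthonormal ℝ (({1, 2} : Set (Fin 3)).domRestrict ![0, p.1.1, p.1.2]) := by
    rw [orthonormal_iff_ite]
    rintro ⟨i, rfl | rfl⟩ ⟨j, rfl | rfl⟩
    · simpa [Set.domRestrict] using p.2.1
    · rw [if_neg fun h => absurd (congrArg Subtype.val h) (by decide)]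
      exact p.2.2.2
    · rw [if_neg fun h => absurd (congrArg Subtype.val h) (by decide)]
      exact p.inner_swap
    · simpa [Set.domRestrict] using p.2.2.1
  obtain ⟨b, hb⟩ := ho.exists_orthonormalBasis_extension_of_card_eq (by simp)
  have h1 : b 1 = p.1.1 := hb 1 (by simp)
  have h2 : b 2 = p.1.2 := hb 2 (by simp)
  refine ⟨b 0, b.orthonormal.1 0, ?_, ?_, fun v => ?_⟩
  · rw [← h1]; exact b.orthonormal.2 (by decide)
  · rw [← h2]; exact b.orthonormal.2 (by decide)
  · rw [← h1, ← h2]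
    conv_lhs => rw [← b.sum_repr' v]
    rw [Fin.sum_univ_three]

end OrthoPair

/-! ### The fan partition -/

/-- For every proper Borel probability measure `μ` on `S²` there exist three planes
through the origin intersecting along a common line — equivalently, an axis `x` and
three angles `t₁ < t₂ < t₃ < t₁ + π` whose half-planes at angles
`t₁, t₂, t₃, t₁+π, t₂+π, t₃+π` — cutting `S²` into six cyclically ordered angular
sectors `σ₁,…,σ₆` with measures in the ratio `1:1:2:1:1:2`, i.e.
`μ(σ₁)=μ(σ₂)=μ(σ₄)=μ(σ₅)=1/8` and `μ(σ₃)=μ(σ₆)=1/4`. -/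
theorem exists_three_plane_fan_partition_112112
    (μ : Measure (sphere (0 : EuclideanSpace ℝ (Fin 3)) 1))
    [IsProbabilityMeasure μ] (hμ : IsProperSphereMeasure μ) :
    ∃ (x u w : EuclideanSpace ℝ (Fin 3)) (t₁ t₂ t₃ : ℝ),
      ‖x‖ = 1 ∧ ‖u‖ = 1 ∧ ‖w‖ = 1 ∧
      ⟪x, u⟫ = 0 ∧ ⟪x, w⟫ = 0 ∧ ⟪u, w⟫ = 0 ∧
      t₁ < t₂ ∧ t₂ < t₃ ∧ t₃ < t₁ + π ∧
      μ (angularSector x u w t₁ t₂) = 1 / 8 ∧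
      μ (angularSector x u w t₂ t₃) = 1 / 8 ∧
      μ (angularSector x u w t₃ (t₁ + π)) = 1 / 4 ∧
      μ (angularSector x u w (t₁ + π) (t₂ + π)) = 1 / 8 ∧
      μ (angularSector x u w (t₂ + π) (t₃ + π)) = 1 / 8 ∧
      μ (angularSector x u w (t₃ + π) (t₁ + 2 * π)) = 1 / 4 := by
  obtain ⟨p, hA, hB, hp⟩ := OrthoPair.exists_defect_eq_zero hμ
  obtain ⟨x, hx1, hxy, hxn, hx⟩ := p.exists_axis
  have hsec := fun {t₁ t₂ : ℝ} => p.angularSector_eq_wedge (t₁ := t₁) (t₂ := t₂) hxy hxn hx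
  have hdirπ : ∀ t, p.dir (t + π) = -p.dir t := by
    intro t
    simp only [OrthoPair.dir, Real.sin_add_pi, Real.cos_add_pi]
    module
  have hpb : OrthoPair.sweep μ p.negBoth π = 1 / 2 := by
    rw [OrthoPair.sweep_negBoth_pi hμ, hp]; norm_num
  have hpf : OrthoPair.sweep μ p.negFst π = 1 / 2 := by
    rw [← hp, OrthoPair.sweep, OrthoPair.sweep, OrthoPair.dir_pi, OrthoPair.dir_pi]; rfl
  have hpfb : OrthoPair.sweep μ p.negFst.negBoth π = 1 / 2 := by
    rw [OrthoPair.sweep_negBoth_pi hμ, hpf]; norm_num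
  obtain ⟨t, ht⟩ : ∃ t, t = OrthoPair.quarterAngle hμ p := ⟨_, rfl⟩
  obtain ⟨t', ht'⟩ : ∃ t', t' = OrthoPair.quarterAngle hμ p.negFst := ⟨_, rfl⟩
  have htb : t = OrthoPair.quarterAngle hμ p.negBoth := ht.trans (sub_eq_zero.1 hA)
  have htb' : t' = OrthoPair.quarterAngle hμ p.negFst.negBoth := ht'.trans (sub_eq_zero.1 hB)
  have ht0 : 0 < t := ht ▸ OrthoPair.quarterAngle_pos hμ p
  have ht0' : 0 < t' := ht' ▸ OrthoPair.quarterAngle_pos hμ _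
  have htπ : t < π := ht ▸ OrthoPair.quarterAngle_lt_pi hμ p
  have htπ' : t' < π := ht' ▸ OrthoPair.quarterAngle_lt_pi hμ _
  have s1 : OrthoPair.sweep μ p t = 1 / 8 := by
    rw [ht, OrthoPair.sweep_quarterAngle, hp]; norm_num
  have s2 : OrthoPair.sweep μ p.negBoth t = 1 / 8 := by
    rw [htb, OrthoPair.sweep_quarterAngle, hpb]; norm_num
  have s3 : OrthoPair.sweep μ p.negFst t' = 1 / 8 := by
    rw [ht', OrthoPair.sweep_quarterAngle, hpf]; norm_num
  have s4 : OrthoPair.sweep μ p.negFst.negBoth t' = 1 / 8 := by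
    rw [htb', OrthoPair.sweep_quarterAngle, hpfb]; norm_num
  have s5 : OrthoPair.sweep μ p (π - t') = 3 / 8 := by
    rw [OrthoPair.sweep_negFst hμ, hp, s3]; norm_num
  have s6 : OrthoPair.sweep μ p.negBoth (π - t') = 3 / 8 := by
    rw [OrthoPair.sweep_negFst hμ, hpb, OrthoPair.negBoth_negFst, s4]; norm_num
  have htt : t < π - t' := by
    by_contra! hle
    rcases hle.eq_or_lt with h | h
    · rw [h] at s5; linarith
    · have := OrthoPair.sweep_lt hμ p (by linarith) h htπ.le
      linarith
  have conv8 : ∀ s : Set (sphere (0 : EuclideanSpace ℝ (Fin 3)) 1), μ.real s = 1 / 8 →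
      μ s = 1 / 8 := by
    intro s hs
    rw [← ofReal_measureReal (measure_ne_top μ s), hs, ENNReal.ofReal_div_of_pos (by norm_num)]
    simp
  have conv4 : ∀ s : Set (sphere (0 : EuclideanSpace ℝ (Fin 3)) 1), μ.real s = 1 / 4 →
      μ s = 1 / 4 := by
    intro s hs
    rw [← ofReal_measureReal (measure_ne_top μ s), hs, ENNReal.ofReal_div_of_pos (by norm_num)]
    simp
  have hunit : ∀ v : EuclideanSpace ℝ (Fin 3), ⟪v, v⟫ = 1 → ‖v‖ = 1 := by
    intro v hv
    rw [real_inner_self_eq_norm_sq] at hv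
    rwa [pow_eq_one_iff_of_nonneg (norm_nonneg _) two_ne_zero] at hv
  refine ⟨x, p.1.1, p.1.2, -t', 0, t, hx1, hunit _ p.2.1, hunit _ p.2.2.1,
    by rwa [real_inner_comm], by rwa [real_inner_comm], p.2.2.2, by linarith, ht0, by linarith,
    ?_, ?_, ?_, ?_, ?_, ?_⟩
  · apply conv8
    rw [hsec (by linarith) (by linarith), ← s4, OrthoPair.sweep, wedge_comm]
    congr 2 <;> simp [OrthoPair.dir, OrthoPair.negFst, OrthoPair.negBoth]; abel
  · apply conv8
    rw [hsec (by linarith) (by linarith), ← s1, OrthoPair.sweep]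
    congr 2; simp [OrthoPair.dir]
  · apply conv4
    rw [hsec (by linarith) (by linarith), show -t' + π = π - t' by ring,
      OrthoPair.measure_wedge_neg_dir hμ p ht0 htt (by linarith), s1, s5]
    norm_num
  · apply conv8
    rw [hsec (by linarith) (by linarith), ← s3, OrthoPair.sweep, wedge_comm, hdirπ, hdirπ]
    congr 2 <;> simp [OrthoPair.dir, OrthoPair.negFst]; abel
  · apply conv8
    rw [hsec (by linarith) (by linarith), ← s2, OrthoPair.sweep, hdirπ, hdirπ]
    congr 2 <;> simp [OrthoPair.dir, OrthoPair.negBoth]; abel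
  · apply conv4
    have hq : ∀ r, p.negBoth.dir r = -p.dir r := by
      intro r
      simp only [OrthoPair.dir, OrthoPair.negBoth]
      module
    have := OrthoPair.measure_wedge_neg_dir hμ p.negBoth ht0 htt (by linarith)
    rw [hq, hq, s2, s6] at this
    rw [hsec (by linarith) (by linarith), show -t' + 2 * π = π - t' + π by ring, hdirπ, hdirπ, this]
    norm_num
end
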